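/- arXiv:1108.1647 — 2 statements merged into one kernel-verified Lean document; each statement's English description precedes it below -/
import Mathlib

section
/- Let 0 < σ < 1, let P be a real homogeneous polynomial of even degree 2k in n variables with P ≠ 0, let |ε| ≤ K(σ,P)⁻¹, and let μ be the probability measure on ℝⁿ with density f(·;ε,σ,P). Then for any unit vector a ∈ ℝⁿ, the pushforward of μ under x ↦ aᵀx has probability density g_a(x) = (2π)^{-1/2} [ e^{-x²/2} + (-1)^k ε P(a) σ^{-(2k+1)} H_{2k}(x/σ) e^{-x²/(2σ²)} ] on ℝ. -/
open MeasureTheory Real ProbabilityTheory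

noncomputable def hermiteR (m : ℕ) (x : ℝ) : ℝ :=
  Polynomial.aeval x (Polynomial.hermite m)

noncomputable def renorm {n : ℕ} (P : MvPolynomial (Fin n) ℝ) (x : Fin n → ℝ) : ℝ :=
  ∑ m ∈ P.support, P.coeff m * ∏ i, hermiteR (m i) (x i)

noncomputable def Kconst (n k : ℕ) (σ : ℝ) (P : MvPolynomial (Fin n) ℝ) : ℝ :=
  ⨆ x : Fin n → ℝ, (σ ^ (n + 2*k))⁻¹ * |renorm P x| * Real.exp (-(1 - σ^2) * (∑ i, x i ^ 2) / 2)

noncomputable def fdens (n k : ℕ) (σ ε : ℝ) (P : MvPolynomial (Fin n) ℝ) (x : Fin n → ℝ) : ℝ :=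
  (2*π)^(-(n:ℝ)/2) * Real.exp (-(∑ i, x i ^ 2)/2) *
    (1 + (-1)^k * ε * (σ^(n+2*k))⁻¹ * renorm P (fun i => x i / σ) *
      Real.exp (-(1-σ^2) * (∑ i, x i ^ 2) / (2*σ^2)))

noncomputable def gdens (n k : ℕ) (σ ε : ℝ) (P : MvPolynomial (Fin n) ℝ) (a : Fin n → ℝ) (x : ℝ) : ℝ :=
  (2*π)^(-(1:ℝ)/2) * (Real.exp (-x^2/2) +
    (-1)^k * ε * MvPolynomial.eval a P * (σ^(2*k+1))⁻¹ * hermiteR (2*k) (x/σ) * Real.exp (-x^2/(2*σ^2)))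

/-!
Pushing forward along `x ↦ aᵀx` restricts the Fourier transform to the line `ℝa`. Up to a Gaussian
factor and a normalization, the Fourier transform turns `:P:(x/σ) exp(-|x|²/(2σ²))` into `P(iσb)`;
since `P` is homogeneous of degree `2k`, the transform of `f` at `b` is
`exp(-|b|²/2) + ε P(b) exp(-σ²|b|²/2)`, and at `b = ta` this is the transform of `g_a` at `t`.

That `g_a` is nonnegative is a consequence rather than an input: Fourier uniqueness shows that the
pushforward plus the negative part of `g_a` equals its positive part, and since the two parts are
mutually singular, the negative part vanishes.
-/

open Complex (I)
open scoped RealInnerProductSpace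

section CharIntegral

variable {E F : Type*} [MeasurableSpace E] {ρ : Measure E} {L f g : E → ℝ}

/-- The integral `∫ exp(i L(x)) f(x) dρ(x)`: the characteristic function of the signed measure with
density `f` with respect to `ρ`, evaluated at the real phase `L`. Unlike `charFun`, it applies to
densities that change sign. -/
noncomputable def charIntegral (ρ : Measure E) (L f : E → ℝ) : ℂ :=
  ∫ x, Complex.exp (L x * I) * f x ∂ρ

theorem integrable_cexp_ofReal_mul_I_mul (hL : AEMeasurable L ρ) (hf : Integrable f ρ) :
    Integrable (fun x => Complex.exp (L x * I) * f x) ρ := by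
  refine hf.ofReal.bdd_mul (c := 1) (AEMeasurable.aestronglyMeasurable (by fun_prop))
    (.of_forall fun x => ?_)
  rw [Complex.norm_exp_ofReal_mul_I]

theorem charIntegral_add (hL : AEMeasurable L ρ) (hf : Integrable f ρ) (hg : Integrable g ρ) :
    charIntegral ρ L (fun x => f x + g x) = charIntegral ρ L f + charIntegral ρ L g := by
  simp only [charIntegral, Complex.ofReal_add, mul_add]
  exact integral_add (integrable_cexp_ofReal_mul_I_mul hL hf)
    (integrable_cexp_ofReal_mul_I_mul hL hg)

theorem charIntegral_const_mul (c : ℝ) :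
    charIntegral ρ L (fun x => c * f x) = c * charIntegral ρ L f := by
  simp only [charIntegral, Complex.ofReal_mul, mul_left_comm _ (c : ℂ)]
  exact integral_const_mul _ _

theorem charIntegral_finsetSum {ι : Type*} {s : Finset ι} {f : ι → E → ℝ}
    (hL : AEMeasurable L ρ) (hf : ∀ i ∈ s, Integrable (f i) ρ) :
    charIntegral ρ L (fun x => ∑ i ∈ s, f i x) = ∑ i ∈ s, charIntegral ρ L (f i) := by
  simp only [charIntegral, Complex.ofReal_sum, Finset.mul_sum]
  exact integral_finsetSum _ fun i hi => integrable_cexp_ofReal_mul_I_mul hL (hf i hi)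

theorem charIntegral_pi_prod {ι : Type*} [Fintype ι] {X : ι → Type*}
    [∀ i, MeasurableSpace (X i)] (μ : ∀ i, Measure (X i)) [∀ i, SigmaFinite (μ i)]
    (L f : ∀ i, X i → ℝ) :
    charIntegral (Measure.pi μ) (fun x => ∑ i, L i (x i)) (fun x => ∏ i, f i (x i)) =
      ∏ i, charIntegral (μ i) (L i) (f i) := by
  simp only [charIntegral, Complex.ofReal_sum, Complex.ofReal_prod, Finset.sum_mul,
    Complex.exp_sum, ← Finset.prod_mul_distrib]
  exact integral_fintype_prod_eq_prod fun i x => Complex.exp (L i x * I) * f i x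

theorem charIntegral_deriv {f f' : ℝ → ℝ} (hderiv : ∀ x, HasDerivAt f (f' x) x)
    (hf : Integrable f) (hf' : Integrable f') (t : ℝ) :
    charIntegral volume (fun x => t * x) f' =
      -(t * I) * charIntegral volume (fun x => t * x) f := by
  have hexp (x : ℝ) : HasDerivAt (fun x : ℝ => Complex.exp ((t * x : ℝ) * I))
      (t * I * Complex.exp ((t * x : ℝ) * I)) x := by
    simpa [mul_comm] using (((hasDerivAt_id x).const_mul t).ofReal_comp.mul_const I).cexp
  have hphase : AEMeasurable (fun x : ℝ => t * x) := by fun_prop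
  have hint := integrable_cexp_ofReal_mul_I_mul hphase hf
  have hint' := integrable_cexp_ofReal_mul_I_mul hphase hf'
  have by_parts := integral_mul_deriv_eq_deriv_mul_of_integrable (fun x _ => hexp x)
    (fun x _ => (hderiv x).ofReal_comp) hint'
    ((hint.const_mul (t * I)).congr (.of_forall fun x => (mul_assoc _ _ _).symm)) hint
  simpa only [charIntegral, mul_assoc, integral_const_mul, neg_mul] using by_parts

theorem charIntegral_eq_integral_sub_integral (hL : AEMeasurable L ρ) (hf : Integrable f ρ) :
    charIntegral ρ L f =
      ∫ x, Complex.exp (L x * I) ∂(ρ.withDensity fun x => ENNReal.ofReal (f x)) -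
        ∫ x, Complex.exp (L x * I) ∂(ρ.withDensity fun x => ENNReal.ofReal (-f x)) := by
  have integral_withDensity {h : E → ℝ} (hh : Integrable h ρ) :
      ∫ x, Complex.exp (L x * I) ∂(ρ.withDensity fun x => ENNReal.ofReal (h x)) =
        charIntegral ρ L (fun x => max (h x) 0) := by
    rw [integral_withDensity_eq_integral_toReal_smul₀ (by fun_prop) (by simp)]
    simp only [charIntegral, ENNReal.toReal_ofReal', Complex.real_smul, mul_comm]
  rw [integral_withDensity hf, integral_withDensity hf.fun_neg, eq_sub_iff_add_eq,
    ← charIntegral_add hL hf hf.fun_neg.pos_part]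
  congr with x
  exact eq_sub_iff_add_eq.mp (max_zero_sub_max_neg_zero_eq_self (f x)).symm

theorem withDensity_ofReal_mutuallySingular₀ (hf : AEMeasurable f ρ) :
    (ρ.withDensity fun x => ENNReal.ofReal (f x)) ⟂ₘ
      ρ.withDensity fun x => ENNReal.ofReal (-f x) := by
  rw [withDensity_congr_ae (f := fun x => ENNReal.ofReal (f x))
      (hf.ae_eq_mk.fun_comp ENNReal.ofReal),
    withDensity_congr_ae (f := fun x => ENNReal.ofReal (-f x))
      (hf.ae_eq_mk.fun_comp fun r => ENNReal.ofReal (-r))]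
  exact withDensity_ofReal_mutuallySingular hf.measurable_mk

variable [NormedAddCommGroup F] [InnerProductSpace ℝ F] [CompleteSpace F]
  [SecondCountableTopology F] [MeasurableSpace F] [BorelSpace F]

theorem eq_withDensity_ofReal_of_charFun_eq {ν ρ : Measure F} [IsFiniteMeasure ν] {g : F → ℝ}
    (hg : Integrable g ρ) (h : ∀ t, charFun ν t = charIntegral ρ (fun y => ⟪y, t⟫) g) :
    ν = ρ.withDensity fun y => ENNReal.ofReal (g y) := by
  set pos := ρ.withDensity fun y => ENNReal.ofReal (g y)
  set neg := ρ.withDensity fun y => ENNReal.ofReal (-g y)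
  have : IsFiniteMeasure pos := isFiniteMeasure_withDensity_ofReal hg.2
  have : IsFiniteMeasure neg := isFiniteMeasure_withDensity_ofReal hg.neg.2
  have hadd : ν + neg = pos := by
    refine Measure.ext_of_charFun (funext fun t => ?_)
    have hchar : charFun ν t = charFun pos t - charFun neg t :=
      (h t).trans (charIntegral_eq_integral_sub_integral (by fun_prop) hg)
    have hint (m : Measure F) [IsFiniteMeasure m] :
        Integrable (fun y => Complex.exp (⟪y, t⟫ * I)) m :=
      .of_bound (C := 1) (by fun_prop)
        (.of_forall fun y => (Complex.norm_exp_ofReal_mul_I _).le)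
    rw [charFun_apply, integral_add_measure (hint ν) (hint neg)]
    exact eq_sub_iff_add_eq.mp hchar
  have hneg : neg = 0 := by
    refine Measure.eq_zero_of_absolutelyContinuous_of_mutuallySingular (ν := pos) ?_
      (withDensity_ofReal_mutuallySingular₀ hg.aemeasurable).symm
    exact hadd ▸ Measure.absolutelyContinuous_of_le (Measure.le_add_left le_rfl)
  rw [← hadd, hneg, add_zero]

theorem map_withDensity_ofReal_eq_of_charIntegral_eq {T : E → F} {ρ' : Measure F} {g : F → ℝ}
    (hT : AEMeasurable T ρ) (hf : Integrable f ρ) (hf_nonneg : 0 ≤ᵐ[ρ] f) (hg : Integrable g ρ')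
    (h : ∀ t, charIntegral ρ (fun x => ⟪T x, t⟫) f = charIntegral ρ' (fun y => ⟪y, t⟫) g) :
    (ρ.withDensity fun x => ENNReal.ofReal (f x)).map T =
      ρ'.withDensity fun y => ENNReal.ofReal (g y) := by
  have := isFiniteMeasure_withDensity_ofReal hf.2
  refine eq_withDensity_ofReal_of_charFun_eq hg fun t => ?_
  have hneg : (ρ.withDensity fun x => ENNReal.ofReal (-f x)) = 0 :=
    withDensity_eq_zero_iff (by fun_prop) |>.mpr
      (hf_nonneg.mono fun x hx => ENNReal.ofReal_of_nonpos (neg_nonpos.mpr hx))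
  rw [← h t, charIntegral_eq_integral_sub_integral (by fun_prop) hf, hneg, integral_zero_measure,
    sub_zero, charFun_apply, integral_map (hT.mono_ac (withDensity_absolutelyContinuous _ _))
      (by fun_prop)]

end CharIntegral

section Hermite

variable {n : ℕ} {σ : ℝ}

theorem integrable_polynomial_mul_exp_neg_mul_sq {b : ℝ} (hb : 0 < b) (p : Polynomial ℝ) :
    Integrable (fun x => p.eval x * Real.exp (-b * x ^ 2)) := by
  induction p using Polynomial.induction_on' with
  | add p q hp hq => simpa only [Polynomial.eval_add, add_mul] using hp.fun_add hq
  | monomial m c =>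
    have hm : (-1 : ℝ) < m := by linarith [Nat.cast_nonneg (α := ℝ) m]
    simpa only [Polynomial.eval_monomial, Real.rpow_natCast, mul_assoc] using
      (integrable_rpow_mul_exp_neg_mul_sq hb hm).const_mul c

theorem hasDerivAt_hermiteR (m : ℕ) (x : ℝ) :
    HasDerivAt (hermiteR m) (x * hermiteR m x - hermiteR (m + 1) x) x := by
  refine ((Polynomial.hermite m).hasDerivAt_aeval x).congr_deriv ?_
  simp [hermiteR, Polynomial.hermite_succ]

/-- The Hermite function `H_m(x/σ) exp(-x²/(2σ²))` of order `m` at scale `σ`. -/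
noncomputable def hermiteGaussian (m : ℕ) (σ x : ℝ) : ℝ :=
  hermiteR m (x / σ) * Real.exp (-x ^ 2 / (2 * σ ^ 2))

theorem hermiteGaussian_zero (σ x : ℝ) :
    hermiteGaussian 0 σ x = Real.exp (-x ^ 2 / (2 * σ ^ 2)) := by
  simp [hermiteGaussian, hermiteR]

theorem integrable_hermiteGaussian (m : ℕ) (hσ : σ ≠ 0) : Integrable (hermiteGaussian m σ) := by
  have hb : 0 < (2 * σ ^ 2)⁻¹ := by positivity
  refine (integrable_polynomial_mul_exp_neg_mul_sq hb
    (((Polynomial.hermite m).map (Int.castRingHom ℝ)).comp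
      (.C σ⁻¹ * .X))).congr (.of_forall fun x => ?_)
  simp only [hermiteGaussian, hermiteR, Polynomial.eval_comp, Polynomial.eval_mul,
    Polynomial.eval_C, Polynomial.eval_X, Polynomial.eval_map, Polynomial.aeval_def,
    algebraMap_int_eq]
  ring_nf

theorem hasDerivAt_hermiteGaussian (m : ℕ) (σ x : ℝ) :
    HasDerivAt (hermiteGaussian m σ) (-σ⁻¹ * hermiteGaussian (m + 1) σ x) x := by
  have hH := (hasDerivAt_hermiteR m (x / σ)).comp x ((hasDerivAt_id x).div_const σ)
  have hG := (((hasDerivAt_id x).pow 2).neg.div_const (2 * σ ^ 2)).exp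
  refine (hH.mul hG).congr_deriv ?_
  simp only [hermiteGaussian, one_div, Pi.neg_apply, Pi.pow_apply, id_eq, Function.comp_apply,
    Nat.cast_ofNat, Nat.add_one_sub_one, pow_one, mul_one, neg_mul]
  ring

theorem charIntegral_hermiteGaussian_zero (hσ : 0 < σ) (t : ℝ) :
    charIntegral volume (fun x => t * x) (hermiteGaussian 0 σ) =
      (σ * √(2 * π) : ℝ) * Complex.exp (-(σ * t) ^ 2 / 2) := by
  have hb : 0 < ((2 * (σ : ℂ) ^ 2)⁻¹).re := by
    norm_cast
    positivity
  have hconst : ((π : ℂ) / (2 * (σ : ℂ) ^ 2)⁻¹) ^ (1 / 2 : ℂ) = (σ * √(2 * π) : ℝ) := by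
    have hsqrt : σ * √(2 * π) = (π / (2 * σ ^ 2)⁻¹) ^ (1 / 2 : ℝ) := by
      rw [← Real.sqrt_eq_rpow, div_inv_eq_mul, show π * (2 * σ ^ 2) = σ ^ 2 * (2 * π) by ring,
        Real.sqrt_mul (sq_nonneg σ), Real.sqrt_sq hσ.le]
    rw [hsqrt, Complex.ofReal_cpow (by positivity)]
    push_cast
    rfl
  have hfourier := fourierIntegral_gaussian hb t
  rw [hconst] at hfourier
  have hσ' : (σ : ℂ) ≠ 0 := mod_cast hσ.ne'
  convert hfourier using 1
  · simp only [charIntegral, hermiteGaussian_zero]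
    push_cast
    congr with x
    ring_nf
  · congr 2
    field_simp
    ring

theorem charIntegral_hermiteGaussian (m : ℕ) (hσ : 0 < σ) (t : ℝ) :
    charIntegral volume (fun x => t * x) (hermiteGaussian m σ) =
      (σ * √(2 * π) : ℝ) * (I * σ * t) ^ m * Complex.exp (-(σ * t) ^ 2 / 2) := by
  induction m with
  | zero => rw [charIntegral_hermiteGaussian_zero hσ, pow_zero, mul_one]
  | succ m ih =>
    have hσ' : (σ : ℂ) ≠ 0 := mod_cast hσ.ne'
    have hderiv := charIntegral_deriv (hasDerivAt_hermiteGaussian m σ)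
      (integrable_hermiteGaussian m hσ.ne')
      ((integrable_hermiteGaussian (m + 1) hσ.ne').const_mul (-σ⁻¹)) t
    rw [charIntegral_const_mul, ih] at hderiv
    rw [Complex.ofReal_neg, Complex.ofReal_inv, neg_mul, neg_mul, neg_inj,
      inv_mul_eq_iff_eq_mul₀ hσ'] at hderiv
    rw [hderiv]
    ring

/-- The function `:P:(x/σ) exp(-|x|²/(2σ²))`, the multivariate analogue of `hermiteGaussian`. -/
noncomputable def renormGaussian (P : MvPolynomial (Fin n) ℝ) (σ : ℝ) (x : Fin n → ℝ) : ℝ :=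
  renorm P (fun i => x i / σ) * Real.exp (-(∑ i, x i ^ 2) / (2 * σ ^ 2))

theorem renormGaussian_one (σ : ℝ) (x : Fin n → ℝ) :
    renormGaussian 1 σ x = Real.exp (-(∑ i, x i ^ 2) / (2 * σ ^ 2)) := by
  simp [renormGaussian, renorm, MvPolynomial.support_one, hermiteR]

theorem renormGaussian_eq_sum (P : MvPolynomial (Fin n) ℝ) (σ : ℝ) :
    renormGaussian P σ = fun x =>
      ∑ m ∈ P.support, P.coeff m * ∏ i, hermiteGaussian (m i) σ (x i) := by
  ext x
  simp only [renormGaussian, renorm, hermiteGaussian, Finset.prod_mul_distrib, ← Real.exp_sum,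
    ← Finset.sum_div, Finset.sum_neg_distrib, Finset.sum_mul, mul_assoc]

theorem integrable_prod_hermiteGaussian {ι : Type*} [Fintype ι] (m : ι → ℕ) (hσ : σ ≠ 0) :
    Integrable (fun x : ι → ℝ => ∏ i, hermiteGaussian (m i) σ (x i)) :=
  .fintype_prod fun i => integrable_hermiteGaussian (m i) hσ

theorem integrable_renormGaussian (P : MvPolynomial (Fin n) ℝ) (hσ : σ ≠ 0) :
    Integrable (renormGaussian P σ) := by
  rw [renormGaussian_eq_sum]
  exact integrable_finsetSum _ fun m _ => (integrable_prod_hermiteGaussian m hσ).const_mul _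

theorem charIntegral_prod_hermiteGaussian {ι : Type*} [Fintype ι] (m : ι → ℕ) (hσ : 0 < σ)
    (b : ι → ℝ) :
    charIntegral volume (fun x : ι → ℝ => ∑ i, b i * x i)
        (fun x => ∏ i, hermiteGaussian (m i) σ (x i)) =
      (σ * √(2 * π) : ℝ) ^ Fintype.card ι * (∏ i, (I * σ * b i) ^ m i) *
        Complex.exp (-σ ^ 2 * (∑ i, (b i : ℂ) ^ 2) / 2) := by
  rw [volume_pi, charIntegral_pi_prod _ (fun i x => b i * x)]
  simp only [charIntegral_hermiteGaussian _ hσ, Finset.prod_mul_distrib, Finset.prod_const,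
    Finset.card_univ, ← Complex.exp_sum, ← Finset.sum_div, mul_pow, Finset.sum_neg_distrib,
    Finset.mul_sum, neg_mul]

theorem charIntegral_renormGaussian (P : MvPolynomial (Fin n) ℝ) (hσ : 0 < σ) (b : Fin n → ℝ) :
    charIntegral volume (fun x => ∑ i, b i * x i) (renormGaussian P σ) =
      (σ * √(2 * π) : ℝ) ^ n * MvPolynomial.aeval (fun i => I * σ * b i) P *
        Complex.exp (-σ ^ 2 * (∑ i, (b i : ℂ) ^ 2) / 2) := by
  rw [renormGaussian_eq_sum, MvPolynomial.aeval_def, MvPolynomial.eval₂_eq', Finset.mul_sum,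
    Finset.sum_mul]
  have hsum := charIntegral_finsetSum (L := fun x : Fin n → ℝ => ∑ i, b i * x i)
    (Continuous.aemeasurable (by fun_prop)) fun m (_ : m ∈ P.support) =>
      (integrable_prod_hermiteGaussian m hσ.ne').const_mul (P.coeff m)
  refine hsum.trans (Finset.sum_congr rfl fun m _ => ?_)
  rw [charIntegral_const_mul, charIntegral_prod_hermiteGaussian m hσ, Fintype.card_fin,
    Complex.coe_algebraMap]
  ring

theorem aeval_const_mul_of_isHomogeneous {ι R S : Type*} [CommSemiring R] [CommSemiring S]
    [Algebra R S] {P : MvPolynomial ι R} {d : ℕ} (hP : P.IsHomogeneous d) (c : S) (x : ι → S) :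
    MvPolynomial.aeval (fun i => c * x i) P = c ^ d * MvPolynomial.aeval x P := by
  simp only [MvPolynomial.aeval_def, MvPolynomial.eval₂_eq, Finset.mul_sum]
  refine Finset.sum_congr rfl fun m hm => ?_
  have hdeg : ∑ i ∈ m.support, m i = d := by
    rw [← Finsupp.degree_apply, Finsupp.degree_eq_weight_one]
    exact hP (MvPolynomial.mem_support_iff.mp hm)
  rw [← hdeg, ← Finset.prod_pow_eq_pow_sum]
  simp only [mul_pow, Finset.prod_mul_distrib]
  ring

end Hermite

section Projection

variable {n k : ℕ} {σ ε : ℝ} {P : MvPolynomial (Fin n) ℝ}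

theorem rpow_neg_div_two_mul_sqrt_pow {c : ℝ} (hc : 0 < c) (n : ℕ) :
    c ^ (-(n : ℝ) / 2) * √c ^ n = 1 := by
  rw [Real.sqrt_eq_rpow, ← Real.rpow_mul_natCast hc.le, ← Real.rpow_add hc,
    show -(n : ℝ) / 2 + 1 / 2 * n = 0 by ring, Real.rpow_zero]

theorem normalization_mul_fourier_factor (hσ : σ ≠ 0) (n k : ℕ) (ε : ℝ) :
    (2 * π) ^ (-(n : ℝ) / 2) * ((-1) ^ k * ε * (σ ^ (n + 2 * k))⁻¹) *
      ((σ * √(2 * π)) ^ n * ((-1) ^ k * σ ^ (2 * k))) = ε := by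
  calc _ = ((2 * π) ^ (-(n : ℝ) / 2) * √(2 * π) ^ n) * ((-1) ^ k * (-1) ^ k) *
        ((σ ^ (n + 2 * k))⁻¹ * σ ^ (n + 2 * k)) * ε := by ring
    _ = ε := by
      rw [rpow_neg_div_two_mul_sqrt_pow two_pi_pos, inv_mul_cancel₀ (pow_ne_zero _ hσ),
        pow_mul_pow_eq_one k (by norm_num), one_mul, one_mul, one_mul]

theorem fdens_eq_renormGaussian (hσ : σ ≠ 0) :
    fdens n k σ ε P = fun x => (2 * π) ^ (-(n : ℝ) / 2) *
      (renormGaussian 1 1 x + (-1) ^ k * ε * (σ ^ (n + 2 * k))⁻¹ * renormGaussian P σ x) := by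
  ext x
  have hexp : Real.exp (-(∑ i, x i ^ 2) / (2 * σ ^ 2)) = Real.exp (-(∑ i, x i ^ 2) / 2) *
      Real.exp (-(1 - σ ^ 2) * (∑ i, x i ^ 2) / (2 * σ ^ 2)) := by
    rw [← Real.exp_add]
    congr 1
    field_simp
    ring
  rw [fdens, renormGaussian_one, renormGaussian, hexp, one_pow, mul_one]
  ring

theorem gdens_eq_hermiteGaussian (a : Fin n → ℝ) :
    gdens n k σ ε P a = fun x => (2 * π) ^ (-(1 : ℝ) / 2) * (hermiteGaussian 0 1 x +
      (-1) ^ k * ε * MvPolynomial.eval a P * (σ ^ (2 * k + 1))⁻¹ *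
        hermiteGaussian (2 * k) σ x) := by
  ext x
  rw [gdens, hermiteGaussian_zero, hermiteGaussian, one_pow, mul_one, ← mul_assoc]

theorem integrable_fdens (hσ : σ ≠ 0) : Integrable (fdens n k σ ε P) := by
  rw [fdens_eq_renormGaussian hσ]
  exact ((integrable_renormGaussian 1 one_ne_zero).fun_add
    ((integrable_renormGaussian P hσ).const_mul _)).const_mul _

theorem integrable_gdens (hσ : σ ≠ 0) (a : Fin n → ℝ) : Integrable (gdens n k σ ε P a) := by
  rw [gdens_eq_hermiteGaussian]
  exact ((integrable_hermiteGaussian 0 one_ne_zero).fun_add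
    ((integrable_hermiteGaussian (2 * k) hσ).const_mul _)).const_mul _

theorem charIntegral_fdens (hσ : 0 < σ) (hP : P.IsHomogeneous (2 * k)) (b : Fin n → ℝ) :
    charIntegral volume (fun x => ∑ i, b i * x i) (fdens n k σ ε P) =
      Complex.exp (-(∑ i, (b i : ℂ) ^ 2) / 2) +
        ε * MvPolynomial.eval b P * Complex.exp (-σ ^ 2 * (∑ i, (b i : ℂ) ^ 2) / 2) := by
  have hgauss : (((2 * π) ^ (-(n : ℝ) / 2) : ℝ) : ℂ) * (√(2 * π) : ℂ) ^ n = 1 :=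
    mod_cast rpow_neg_div_two_mul_sqrt_pow two_pi_pos n
  have hfactor := congrArg ((↑) : ℝ → ℂ) (normalization_mul_fourier_factor hσ.ne' n k ε)
  have hPb : MvPolynomial.aeval (fun i => I * σ * b i) P =
      (-1) ^ k * σ ^ (2 * k) * (MvPolynomial.eval b P : ℂ) := by
    rw [aeval_const_mul_of_isHomogeneous hP, mul_pow, pow_mul, Complex.I_sq]
    exact congrArg _ (MvPolynomial.aeval_algebraMap_apply ℂ b P)
  rw [fdens_eq_renormGaussian hσ.ne', charIntegral_const_mul,
    charIntegral_add (Continuous.aemeasurable (by fun_prop))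
      (integrable_renormGaussian 1 one_ne_zero)
      ((integrable_renormGaussian P hσ.ne').const_mul _),
    charIntegral_const_mul, charIntegral_renormGaussian 1 one_pos,
    charIntegral_renormGaussian P hσ, hPb, map_one]
  push_cast at hfactor hgauss ⊢
  simp only [one_mul, mul_one, one_pow, neg_mul]
  linear_combination Complex.exp (-(∑ i, (b i : ℂ) ^ 2) / 2) * hgauss +
    MvPolynomial.eval b P * Complex.exp (-(σ ^ 2 * (∑ i, (b i : ℂ) ^ 2)) / 2) * hfactor

theorem charIntegral_gdens (hσ : 0 < σ) (a : Fin n → ℝ) (t : ℝ) :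
    charIntegral volume (fun x => t * x) (gdens n k σ ε P a) =
      Complex.exp (-t ^ 2 / 2) +
        ε * (t ^ (2 * k) * MvPolynomial.eval a P) * Complex.exp (-σ ^ 2 * t ^ 2 / 2) := by
  have hgauss : (((2 * π) ^ (-(1 : ℝ) / 2) : ℝ) : ℂ) * (√(2 * π) : ℂ) = 1 := by
    simpa using congrArg ((↑) : ℝ → ℂ) (rpow_neg_div_two_mul_sqrt_pow two_pi_pos 1)
  have hfactor := congrArg ((↑) : ℝ → ℂ) (normalization_mul_fourier_factor hσ.ne' 1 k ε)
  have hpow : (I * σ * t) ^ (2 * k) = (-1) ^ k * σ ^ (2 * k) * t ^ (2 * k) := by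
    rw [mul_pow, mul_pow, pow_mul I, Complex.I_sq]
  rw [gdens_eq_hermiteGaussian, charIntegral_const_mul,
    charIntegral_add (by fun_prop) (integrable_hermiteGaussian 0 one_ne_zero)
      ((integrable_hermiteGaussian (2 * k) hσ.ne').const_mul _),
    charIntegral_const_mul, charIntegral_hermiteGaussian 0 one_pos,
    charIntegral_hermiteGaussian (2 * k) hσ, hpow]
  rw [Nat.cast_one, add_comm 1] at hfactor
  push_cast at hfactor hgauss ⊢
  simp only [one_mul, mul_one, pow_one, pow_zero, neg_mul, mul_pow] at hfactor ⊢
  linear_combination Complex.exp (-t ^ 2 / 2) * hgauss +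
    t ^ (2 * k) * MvPolynomial.eval a P * Complex.exp (-(σ ^ 2 * t ^ 2) / 2) * hfactor

theorem mul_le_one_of_le_inv_iSup {ι : Type*} {F : ι → ℝ} {c : ℝ} (hc : 0 ≤ c)
    (hcF : c ≤ (⨆ i, F i)⁻¹) (i : ι) : c * F i ≤ 1 := by
  by_cases hF : BddAbove (Set.range F)
  · calc c * F i ≤ c * ⨆ i, F i := mul_le_mul_of_nonneg_left (le_ciSup hF i) hc
      _ ≤ (⨆ i, F i)⁻¹ * ⨆ i, F i :=
        mul_le_mul_of_nonneg_right hcF (inv_nonneg.mp (hc.trans hcF))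
      _ ≤ 1 := inv_mul_le_one
  · -- the supremum takes the junk value `0`, which forces `c = 0`
    rw [Real.iSup_of_not_bddAbove hF, inv_zero] at hcF
    rw [le_antisymm hcF hc, zero_mul]
    exact zero_le_one

theorem fdens_nonneg (hσ : 0 < σ) (hε : |ε| ≤ (Kconst n k σ P)⁻¹) (x : Fin n → ℝ) :
    0 ≤ fdens n k σ ε P x := by
  have hbound := mul_le_one_of_le_inv_iSup (abs_nonneg ε) hε fun i => x i / σ
  have hexp : -(1 - σ ^ 2) * (∑ i, (x i / σ) ^ 2) / 2 =
      -(1 - σ ^ 2) * (∑ i, x i ^ 2) / (2 * σ ^ 2) := by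
    simp only [div_pow, ← Finset.sum_div]
    ring
  have habs : |(-1) ^ k * ε * (σ ^ (n + 2 * k))⁻¹ * renorm P (fun i => x i / σ) *
      Real.exp (-(1 - σ ^ 2) * (∑ i, x i ^ 2) / (2 * σ ^ 2))| ≤ 1 := by
    simpa only [hexp, abs_mul, abs_pow, abs_neg, abs_one, one_pow, one_mul, abs_inv,
      Real.abs_exp, abs_of_pos hσ, mul_assoc] using hbound
  exact mul_nonneg (by positivity) (neg_le_iff_add_nonneg'.mp (abs_le.mp habs).1)

end Projection

theorem stmt_5_general (n k : ℕ) (σ : ℝ) (hσ : 0 < σ) (P : MvPolynomial (Fin n) ℝ)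
    (hP : P.IsHomogeneous (2 * k)) (ε : ℝ) (hf : ∀ x, 0 ≤ fdens n k σ ε P x)
    (a : Fin n → ℝ) (ha : ∑ i, a i ^ 2 = 1) :
    Measure.map (fun x => ∑ i, a i * x i)
        (volume.withDensity fun x => ENNReal.ofReal (fdens n k σ ε P x)) =
      volume.withDensity fun x => ENNReal.ofReal (gdens n k σ ε P a x) := by
  refine map_withDensity_ofReal_eq_of_charIntegral_eq (Continuous.aemeasurable (by fun_prop))
    (integrable_fdens hσ.ne') (.of_forall hf) (integrable_gdens hσ.ne' a) fun t => ?_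
  have hphase (x : Fin n → ℝ) : ⟪∑ i, a i * x i, t⟫ = ∑ i, t * a i * x i := by
    simp [Finset.mul_sum, mul_assoc]
  have heval : MvPolynomial.eval (fun i => t * a i) P = t ^ (2 * k) * MvPolynomial.eval a P :=
    aeval_const_mul_of_isHomogeneous hP t a
  have hnorm : ∑ i, ((t * a i : ℝ) : ℂ) ^ 2 = t ^ 2 := by
    have hnorm_real : ∑ i, (t * a i) ^ 2 = t ^ 2 := by
      simp only [mul_pow, ← Finset.mul_sum, ha, mul_one]
    exact_mod_cast hnorm_real
  have hphase_line (y : ℝ) : ⟪y, t⟫ = t * y := by simp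
  simp only [hphase, hphase_line]
  rw [charIntegral_fdens hσ hP, heval, hnorm, charIntegral_gdens hσ]
  push_cast
  rfl

/-- Under the probability measure μ with density f(·;ε,σ,P), for any unit vector a,
the pushforward of μ under x ↦ aᵀx has probability density
g_a(x) = (2π)^{-1/2}[e^{-x²/2} + (-1)^k ε P(a) σ^{-(2k+1)} H_{2k}(x/σ) e^{-x²/(2σ²)}]. -/
theorem stmt_5 (n k : ℕ) (σ : ℝ) (hσ0 : 0 < σ) (hσ1 : σ < 1)
    (P : MvPolynomial (Fin n) ℝ) (hP : P.IsHomogeneous (2 * k)) (hP0 : P ≠ 0)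
    (ε : ℝ) (hε : |ε| ≤ (Kconst n k σ P)⁻¹)
    (μ : Measure (Fin n → ℝ))
    (hμ : μ = volume.withDensity (fun x => ENNReal.ofReal (fdens n k σ ε P x)))
    (a : Fin n → ℝ) (ha : ∑ i, a i ^ 2 = 1) :
    Measure.map (fun x => ∑ i, a i * x i) μ
      = volume.withDensity (fun x => ENNReal.ofReal (gdens n k σ ε P a x)) := by
  rw [hμ]
  exact stmt_5_general n k σ hσ0 P hP ε (fdens_nonneg hσ0 hε) a ha
end

section
/- Let |η| ≤ e²/4 and let μ_η be the probability measure on ℝ² with density f_η(x₁,x₂) = (2π)^{-1} e^{-(x₁²+x₂²)/2} [1 + η (x₁³x₂ − x₂³x₁) e^{-(x₁²+x₂²)/2}]. Then for every angle θ, the pushforward of μ_η under the map (x₁,x₂) ↦ x₁ sin θ + x₂ cos θ has probability density g_θ(x) = (2π)^{-1/2} e^{-x²/2} [1 − (√2 η sin(4θ)/32)(4x⁴ − 12x² + 3) e^{-x²/2}] on ℝ. -/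
open MeasureTheory Real

/-- The bivariate perturbed Gaussian density. -/
noncomputable def fEta (η : ℝ) (x : ℝ × ℝ) : ℝ :=
  (2*π)⁻¹ * Real.exp (-(x.1^2 + x.2^2) / 2) *
    (1 + η * (x.1^3 * x.2 - x.2^3 * x.1) * Real.exp (-(x.1^2 + x.2^2) / 2))

/-!
In the complex coordinate `z = x₁ + i x₂` the perturbation is `Im z⁴ / 4`. The reflection
`(u, v) ↦ z = i · conj (e^{iθ} (u + iv))` preserves Lebesgue measure and `|z|`, turns the linear
form `x₁ sin θ + x₂ cos θ` into the first coordinate `u`, and turns `Im z⁴` into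
`-Im (e^{4iθ} (u + iv)⁴)`. So the density of the pushforward is obtained by integrating out `v`, and
since `∫ (u + iv)⁴ e^{-v²} dv = √π (4u⁴ - 12u² + 3) / 4` is real (a Hermite polynomial), only the
factor `Im e^{4iθ} = sin 4θ` survives.
-/

section Pushforward

variable {α β : Type*} [MeasurableSpace α] [MeasurableSpace β]

theorem map_withDensity_comp (μ : Measure α) {T : α → β} (hT : Measurable T)
    {f : β → ENNReal} (hf : Measurable f) :
    (μ.withDensity (f ∘ T)).map T = (μ.map T).withDensity f := by
  ext s hs
  rw [Measure.map_apply hT hs, withDensity_apply _ (hT hs), withDensity_apply _ hs,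
    setLIntegral_map hs hf hT]
  rfl

theorem map_fst_withDensity_prod (μ : Measure α) (ν : Measure β) [SFinite ν]
    {f : α × β → ENNReal} (hf : Measurable f) :
    ((μ.prod ν).withDensity f).map Prod.fst = μ.withDensity fun x => ∫⁻ y, f (x, y) ∂ν := by
  ext s hs
  rw [Measure.map_apply measurable_fst hs, withDensity_apply _ (measurable_fst hs),
    withDensity_apply _ hs, ← lintegral_indicator (measurable_fst hs), ← lintegral_indicator hs,
    lintegral_prod _ (hf.indicator (measurable_fst hs)).aemeasurable]
  refine lintegral_congr fun x => ?_
  by_cases hx : x ∈ s <;> simp [hx]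

theorem measurePreserving_of_involutive {E : Type*} [NormedAddCommGroup E] [NormedSpace ℝ E]
    [FiniteDimensional ℝ E] [MeasurableSpace E] [BorelSpace E] (μ : Measure E)
    [μ.IsAddHaarMeasure] {T : E →ₗ[ℝ] E} (hT : Function.Involutive T) :
    MeasurePreserving T μ μ := by
  have det_sq : LinearMap.det T * LinearMap.det T = 1 := by
    rw [← LinearMap.det_comp, LinearMap.ext (f := T ∘ₗ T) (g := LinearMap.id) hT,
      LinearMap.det_id]
  have abs_det : |LinearMap.det T| = 1 := by
    rcases mul_self_eq_one_iff.1 det_sq with h | h <;> simp [h]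
  refine ⟨T.continuous_of_finiteDimensional.measurable, ?_⟩
  rw [Measure.map_linearMap_addHaar_eq_smul_addHaar _ (left_ne_zero_of_mul_eq_one det_sq),
    abs_inv, abs_det, inv_one, ENNReal.ofReal_one, one_smul]

/-- The linear map of the plane whose matrix is `!![a, b; b, -a]`; if `a ^ 2 + b ^ 2 = 1`, it is the
orthogonal reflection that exchanges the unit vectors `(a, b)` and `(1, 0)`. -/
def planeReflection (a b : ℝ) : ℝ × ℝ →ₗ[ℝ] ℝ × ℝ :=
  (a • LinearMap.fst ℝ ℝ ℝ + b • LinearMap.snd ℝ ℝ ℝ).prod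
    (b • LinearMap.fst ℝ ℝ ℝ - a • LinearMap.snd ℝ ℝ ℝ)

@[simp]
theorem planeReflection_apply (a b : ℝ) (x : ℝ × ℝ) :
    planeReflection a b x = (a * x.1 + b * x.2, b * x.1 - a * x.2) :=
  rfl

theorem planeReflection_involutive {a b : ℝ} (hab : a ^ 2 + b ^ 2 = 1) :
    Function.Involutive (planeReflection a b) := fun x => by
  ext
  · simp only [planeReflection_apply]
    linear_combination x.1 * hab
  · simp only [planeReflection_apply]
    linear_combination x.2 * hab

theorem map_linearForm_withDensity {a b : ℝ} (hab : a ^ 2 + b ^ 2 = 1)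
    {f : ℝ × ℝ → ENNReal} (hf : Measurable f) :
    (volume.withDensity f).map (fun x => x.1 * a + x.2 * b) =
      volume.withDensity fun u => ∫⁻ v, f (planeReflection a b (u, v)) := by
  have involutive := planeReflection_involutive hab
  have preserving := measurePreserving_of_involutive volume involutive
  have map_reflection : (volume.withDensity f).map (planeReflection a b) =
      volume.withDensity (f ∘ planeReflection a b) := by
    have h := map_withDensity_comp volume preserving.measurable (hf.comp preserving.measurable)
    rwa [Function.comp_assoc, involutive.comp_self, Function.comp_id, preserving.map_eq] at h
  calc (volume.withDensity f).map (fun x => x.1 * a + x.2 * b)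
      = ((volume.withDensity f).map (planeReflection a b)).map Prod.fst := by
        rw [Measure.map_map measurable_fst preserving.measurable]
        congr 1 with x
        simp only [Function.comp_apply, planeReflection_apply]
        ring
    _ = volume.withDensity fun u => ∫⁻ v, f (planeReflection a b (u, v)) := by
        rw [map_reflection, Measure.volume_eq_prod,
          map_fst_withDensity_prod _ _ (hf.comp preserving.measurable)]
        rfl

end Pushforward

section GaussianIntegrals

open Complex (I)
open scoped Complex

variable {b : ℂ}

theorem integrable_pow_mul_cexp_neg_mul_sq (hb : 0 < b.re) (n : ℕ) :
    Integrable fun y : ℝ => (y : ℂ) ^ n * cexp (-b * y ^ 2) := by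
  have real_integrable := integrable_rpow_mul_exp_neg_mul_sq hb (s := n)
    (neg_one_lt_zero.trans_le n.cast_nonneg)
  refine real_integrable.mono (by fun_prop) (.of_forall fun y => le_of_eq ?_)
  rw [norm_mul, norm_mul, norm_pow, norm_cexp_neg_mul_sq, rpow_natCast, norm_pow,
    Complex.norm_real, Real.norm_of_nonneg (exp_nonneg _)]

theorem integrable_add_mul_I_pow_mul_cexp_neg_mul_sq (hb : 0 < b.re) (x : ℂ) (n : ℕ) :
    Integrable fun y : ℝ => (x + y * I) ^ n * cexp (-b * y ^ 2) := by
  simp only [add_comm x, add_pow, Finset.sum_mul]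
  refine integrable_finsetSum _ fun k _ => ((integrable_pow_mul_cexp_neg_mul_sq hb k).const_mul
    (I ^ k * x ^ (n - k) * n.choose k)).congr (.of_forall fun y => ?_)
  ring

/-- The Gaussian average `∫ (x + iy)ⁿ e^{-by²} dy`, equal to `√(π / b)` times a rescaled Hermite
polynomial of degree `n` in `x`. -/
noncomputable def hermiteIntegral (b x : ℂ) (n : ℕ) : ℂ :=
  ∫ y : ℝ, (x + y * I) ^ n * cexp (-b * y ^ 2)

theorem hermiteIntegral_zero (hb : 0 < b.re) (x : ℂ) :
    hermiteIntegral b x 0 = (π / b) ^ (1 / 2 : ℂ) := by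
  simp only [hermiteIntegral, pow_zero, one_mul, integral_gaussian_complex hb]

theorem hasDerivAt_add_mul_I_pow_mul_cexp_neg_mul_sq (b x : ℂ) (n : ℕ) (y : ℝ) :
    HasDerivAt (fun y : ℝ => (x + y * I) ^ n * cexp (-b * y ^ 2))
      (I * (n * ((x + y * I) ^ (n - 1) * cexp (-b * y ^ 2)) +
        2 * b * ((x + y * I) ^ (n + 1) * cexp (-b * y ^ 2) -
          x * ((x + y * I) ^ n * cexp (-b * y ^ 2))))) y := by
  have pow_deriv := (((hasDerivAt_id (y : ℂ)).mul_const I).const_add x).pow n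
  have exp_deriv := ((hasDerivAt_pow 2 (y : ℂ)).const_mul (-b)).cexp
  refine (pow_deriv.mul exp_deriv).comp_ofReal.congr_deriv ?_
  simp only [id, Pi.pow_apply]
  push_cast
  linear_combination (-2 * b * y * (x + y * I) ^ n * cexp (-b * y ^ 2)) * Complex.I_sq

theorem hermiteIntegral_succ (hb : 0 < b.re) (x : ℂ) (n : ℕ) :
    hermiteIntegral b x (n + 1) =
      x * hermiteIntegral b x n - n / (2 * b) * hermiteIntegral b x (n - 1) := by
  have integrable := integrable_add_mul_I_pow_mul_cexp_neg_mul_sq hb x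
  have integrable_prev := (integrable (n - 1)).const_mul (n : ℂ)
  have integrable_sub := (integrable (n + 1)).sub' ((integrable n).const_mul x)
  have integral_deriv := integral_eq_zero_of_hasDerivAt_of_integrable
    (hasDerivAt_add_mul_I_pow_mul_cexp_neg_mul_sq b x n)
    ((integrable_prev.add (integrable_sub.const_mul (2 * b))).const_mul I) (integrable n)
  rw [integral_const_mul, integral_add integrable_prev (integrable_sub.const_mul _),
    integral_const_mul, integral_const_mul,
    integral_sub (integrable (n + 1)) ((integrable n).const_mul x), integral_const_mul]
    at integral_deriv
  have recurrence : n * hermiteIntegral b x (n - 1) +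
      2 * b * (hermiteIntegral b x (n + 1) - x * hermiteIntegral b x n) = 0 :=
    (mul_eq_zero_iff_left Complex.I_ne_zero).1 integral_deriv
  have hb₀ : b ≠ 0 := Complex.ne_zero_of_re_pos hb
  field_simp
  linear_combination recurrence

theorem hermiteIntegral_four (hb : 0 < b.re) (x : ℂ) :
    hermiteIntegral b x 4 =
      (x ^ 4 - 3 * x ^ 2 / b + 3 / (4 * b ^ 2)) * (π / b) ^ (1 / 2 : ℂ) := by
  have hb₀ : b ≠ 0 := Complex.ne_zero_of_re_pos hb
  rw [hermiteIntegral_succ hb x 3, hermiteIntegral_succ hb x 2, hermiteIntegral_succ hb x 1,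
    hermiteIntegral_succ hb x 0, ← hermiteIntegral_zero hb x]
  push_cast
  field_simp
  ring

theorem integrable_im_mul_add_mul_I_pow_mul_cexp_neg_mul_sq (hb : 0 < b.re) (c x : ℂ) (n : ℕ) :
    Integrable fun y : ℝ => (c * ((x + y * I) ^ n * cexp (-b * y ^ 2))).im :=
  ((integrable_add_mul_I_pow_mul_cexp_neg_mul_sq hb x n).const_mul c).im

theorem integral_im_mul_add_mul_I_pow_mul_cexp_neg_mul_sq (hb : 0 < b.re) (c x : ℂ) (n : ℕ) :
    ∫ y : ℝ, (c * ((x + y * I) ^ n * cexp (-b * y ^ 2))).im = (c * hermiteIntegral b x n).im := by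
  rw [hermiteIntegral, ← integral_const_mul]
  exact integral_im ((integrable_add_mul_I_pow_mul_cexp_neg_mul_sq hb x n).const_mul c)

end GaussianIntegrals

theorem pow_mul_exp_neg_le (n : ℕ) {t : ℝ} (ht : 0 ≤ t) :
    t ^ n * exp (-t) ≤ n ^ n * exp (-n) := by
  rcases eq_or_ne n 0 with rfl | hn
  · simpa using ht
  have base_le : t ≤ n * exp (t / n - 1) := by
    calc t = n * (t / n) := by field_simp
      _ ≤ n * exp (t / n - 1) := by
        gcongr
        linarith [add_one_le_exp (t / n - 1)]
  calc t ^ n * exp (-t) ≤ (n * exp (t / n - 1)) ^ n * exp (-t) := by gcongr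
    _ = n ^ n * exp (-n) := by
      rw [mul_pow, ← exp_nat_mul, mul_assoc, ← exp_add]
      congr 2
      field_simp
      ring

section PerturbedGaussian

open Complex (I)
open scoped Complex ComplexConjugate

theorem fEta_equivRealProd (η : ℝ) (z : ℂ) :
    fEta η (Complex.equivRealProd z) =
      (2 * π)⁻¹ * exp (-‖z‖ ^ 2 / 2) * (1 + η * ((z ^ 4).im / 4) * exp (-‖z‖ ^ 2 / 2)) := by
  have im_pow_four : (z ^ 4).im / 4 = z.re ^ 3 * z.im - z.im ^ 3 * z.re := by
    simp only [pow_succ, pow_zero, one_mul, Complex.mul_re, Complex.mul_im]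
    ring
  rw [fEta, Complex.equivRealProd_apply, im_pow_four, Complex.sq_norm, Complex.normSq_apply,
    ← sq, ← sq]

theorem fEta_nonneg {η : ℝ} (hη : |η| ≤ exp 2 / 4) (x : ℝ × ℝ) : 0 ≤ fEta η x := by
  set z := Complex.equivRealProd.symm x with hz
  have perturbation_le_one : |η * ((z ^ 4).im / 4) * exp (-‖z‖ ^ 2 / 2)| ≤ 1 := by
    calc |η * ((z ^ 4).im / 4) * exp (-‖z‖ ^ 2 / 2)|
        = |η| * (|(z ^ 4).im| / 4) * exp (-‖z‖ ^ 2 / 2) := by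
          rw [abs_mul, abs_mul, abs_div, abs_exp, abs_of_pos (four_pos (α := ℝ))]
      _ ≤ |η| * (‖z‖ ^ 4 / 4) * exp (-‖z‖ ^ 2 / 2) := by
          gcongr
          exact (Complex.abs_im_le_norm _).trans_eq (norm_pow z 4)
      _ = |η| * ((‖z‖ ^ 2 / 2) ^ 2 * exp (-(‖z‖ ^ 2 / 2))) := by ring_nf
      _ ≤ exp 2 / 4 * (2 ^ 2 * exp (-2)) := by
          gcongr ?_ * ?_
          exact_mod_cast pow_mul_exp_neg_le 2 (by positivity : 0 ≤ ‖z‖ ^ 2 / 2)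
      _ = 1 := by
          rw [exp_neg]
          field_simp
          norm_num
  rw [← Complex.equivRealProd.apply_symm_apply x, ← hz, fEta_equivRealProd]
  exact mul_nonneg (by positivity) (by linarith [neg_le_of_abs_le perturbation_le_one])

theorem measurable_fEta (η : ℝ) : Measurable (fEta η) := by
  unfold fEta
  fun_prop

theorem planeReflection_sin_cos_equivRealProd (θ : ℝ) (w : ℂ) :
    planeReflection (sin θ) (cos θ) (Complex.equivRealProd w) =
      Complex.equivRealProd (I * conj (cexp (θ * I) * w)) := by
  simp [Complex.exp_ofReal_mul_I_re, Complex.exp_ofReal_mul_I_im, add_comm]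

theorem fEta_planeReflection (η θ u v : ℝ) :
    fEta η (planeReflection (sin θ) (cos θ) (u, v)) =
      (2 * π)⁻¹ * exp (-u ^ 2 / 2) * exp (-(1 / 2) * v ^ 2) -
        (2 * π)⁻¹ * exp (-u ^ 2 / 2) ^ 2 * (η / 4) *
          (cexp (↑(4 * θ) * I) * ((u + v * I) ^ 4 * cexp (-1 * v ^ 2))).im := by
  set z : ℂ := I * conj (cexp (θ * I) * (u + v * I))
  have reflection_eq :
      planeReflection (sin θ) (cos θ) (u, v) = Complex.equivRealProd z := by
    rw [← planeReflection_sin_cos_equivRealProd]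
    simp
  have norm_sq : ‖z‖ ^ 2 = u ^ 2 + v ^ 2 := by
    simp only [z, norm_mul, Complex.norm_I, RCLike.norm_conj, Complex.norm_exp_ofReal_mul_I,
      one_mul, Complex.sq_norm, Complex.normSq_add_mul_I]
  have im_pow_four : (z ^ 4).im = -(cexp (↑(4 * θ) * I) * (u + v * I) ^ 4).im := by
    have exp_pow_four : cexp (θ * I) ^ 4 = cexp (↑(4 * θ) * I) := by
      rw [← Complex.exp_nat_mul]
      push_cast
      ring_nf
    rw [mul_pow, Complex.I_pow_four, one_mul, ← map_pow, Complex.conj_im, mul_pow, exp_pow_four]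
  have exp_norm_sq : exp (-‖z‖ ^ 2 / 2) = exp (-u ^ 2 / 2) * exp (-(1 / 2) * v ^ 2) := by
    rw [← exp_add, norm_sq]
    ring_nf
  have cexp_eq : cexp (-1 * v ^ 2) = (exp (-(1 / 2) * v ^ 2) ^ 2 : ℝ) := by
    rw [← exp_nat_mul]
    push_cast
    ring_nf
  rw [reflection_eq, fEta_equivRealProd, im_pow_four, exp_norm_sq, cexp_eq, ← mul_assoc (cexp _),
    Complex.im_mul_ofReal]
  ring

theorem integrable_fEta_planeReflection (η θ u : ℝ) :
    Integrable fun v => fEta η (planeReflection (sin θ) (cos θ) (u, v)) := by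
  have gaussian := integrable_exp_neg_mul_sq (one_half_pos (α := ℝ))
  have perturbation := integrable_im_mul_add_mul_I_pow_mul_cexp_neg_mul_sq (b := 1) one_pos
    (cexp (↑(4 * θ) * I)) u 4
  simp only [fEta_planeReflection]
  exact (gaussian.const_mul _).sub (perturbation.const_mul _)

theorem im_cexp_mul_hermiteIntegral_one_four (φ u : ℝ) :
    (cexp (φ * I) * hermiteIntegral 1 u 4).im =
      sin φ * (√π / 4 * (4 * u ^ 4 - 12 * u ^ 2 + 3)) := by
  have hermiteIntegral_eq :
      hermiteIntegral 1 u 4 = (√π / 4 * (4 * u ^ 4 - 12 * u ^ 2 + 3) : ℝ) := by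
    rw [hermiteIntegral_four (by simp), sqrt_eq_rpow]
    push_cast [Complex.ofReal_cpow pi_nonneg]
    ring_nf
  rw [hermiteIntegral_eq, Complex.im_mul_ofReal, Complex.exp_ofReal_mul_I_im]

theorem integral_fEta_planeReflection (η θ u : ℝ) :
    ∫ v, fEta η (planeReflection (sin θ) (cos θ) (u, v)) =
      (2 * π) ^ (-(1 : ℝ) / 2) * exp (-u ^ 2 / 2) *
        (1 - √2 * η * sin (4 * θ) / 32 * (4 * u ^ 4 - 12 * u ^ 2 + 3) * exp (-u ^ 2 / 2)) := by
  have rpow_eq : (2 * π) ^ (-(1 : ℝ) / 2) = (√2 * √π)⁻¹ := by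
    rw [neg_div, rpow_neg two_pi_pos.le, ← sqrt_eq_rpow, sqrt_mul zero_le_two]
  have two_pi_eq : 2 * π = √2 ^ 2 * √π ^ 2 := by
    rw [sq_sqrt zero_le_two, sq_sqrt pi_nonneg]
  have gaussian_integral : ∫ v : ℝ, exp (-(1 / 2) * v ^ 2) = √2 * √π := by
    rw [integral_gaussian, ← sqrt_mul zero_le_two, div_div_eq_mul_div, div_one, mul_comm]
  have perturbation_integral :
      ∫ v : ℝ, (cexp (↑(4 * θ) * I) * ((u + v * I) ^ 4 * cexp (-1 * v ^ 2))).im =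
        sin (4 * θ) * (√π / 4 * (4 * u ^ 4 - 12 * u ^ 2 + 3)) := by
    rw [integral_im_mul_add_mul_I_pow_mul_cexp_neg_mul_sq one_pos,
      im_cexp_mul_hermiteIntegral_one_four]
  have gaussian := integrable_exp_neg_mul_sq (one_half_pos (α := ℝ))
  have perturbation := integrable_im_mul_add_mul_I_pow_mul_cexp_neg_mul_sq (b := 1) one_pos
    (cexp (↑(4 * θ) * I)) u 4
  simp only [fEta_planeReflection]
  rw [integral_sub (gaussian.const_mul _) (perturbation.const_mul _), integral_const_mul,
    integral_const_mul, gaussian_integral, perturbation_integral, rpow_eq, two_pi_eq]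
  field_simp
  linear_combination (16 * exp (-(u ^ 2 / 2)) * η * sin (4 * θ) *
    (u ^ 2 * (u ^ 2 * 4 - 12) + 3)) * sq_sqrt (zero_le_two (α := ℝ))

end PerturbedGaussian

/-- For |η| ≤ e²/4 and μ_η the measure with density f_η, the pushforward of μ_η under
(x₁,x₂) ↦ x₁ sin θ + x₂ cos θ has density
g_θ(x) = (2π)^{-1/2} e^{-x²/2}[1 − (√2 η sin(4θ)/32)(4x⁴ − 12x² + 3)e^{-x²/2}]. -/
theorem stmt_15 (η : ℝ) (hη : |η| ≤ Real.exp 2 / 4)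
    (μ : Measure (ℝ × ℝ)) (hμ : μ = volume.withDensity (fun x => ENNReal.ofReal (fEta η x)))
    (θ : ℝ) :
    Measure.map (fun x : ℝ × ℝ => x.1 * Real.sin θ + x.2 * Real.cos θ) μ
      = volume.withDensity (fun x : ℝ =>
          ENNReal.ofReal ((2*π)^(-(1:ℝ)/2) * Real.exp (-x^2/2) *
            (1 - (Real.sqrt 2 * η * Real.sin (4*θ) / 32) * (4*x^4 - 12*x^2 + 3) *
              Real.exp (-x^2/2)))) := by
  rw [hμ, map_linearForm_withDensity (sin_sq_add_cos_sq θ) (measurable_fEta η).ennreal_ofReal]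
  congr 1 with u
  rw [← integral_fEta_planeReflection, ofReal_integral_eq_lintegral_ofReal
    (integrable_fEta_planeReflection η θ u) (.of_forall fun v => fEta_nonneg hη _)]
end
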